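/- arXiv:math/0303317 — 2 statements merged into one kernel-verified Lean document; each statement's English description precedes it below -/
import Mathlib

section
/- For every natural number n ≥ 4, the Orchard crossing number of the complete graph K_n equals 2·C(n,4), i.e., OCN(K_n) = 2·(n choose 4), and this minimum is attained by any rectilinear drawing placing all n vertices in convex position. -/
/-!
Common definitions for the Orchard crossing number
(Feder–Garber, "The Orchard crossing number of an abstract graph").
-/

noncomputable section

/-- Points of the plane. -/
abbrev Pt : Type := ℝ × ℝ

/-- The line through two points of the plane. -/
def lineThrough (p q : Pt) : Set Pt := (affineSpan ℝ ({p, q} : Set Pt) : Set Pt)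

/-- A line (or any set) `L` separates the points `P` and `Q` if both lie off `L`
and they lie in different connected components of the complement of `L`. -/
def Separates (L : Set Pt) (P Q : Pt) : Prop :=
  P ∉ L ∧ Q ∉ L ∧ connectedComponentIn Lᶜ P ≠ connectedComponentIn Lᶜ Q

theorem Separates.symm {L : Set Pt} {P Q : Pt} (h : Separates L P Q) : Separates L Q P :=
  ⟨h.2.1, h.1, h.2.2.symm⟩

/-- A generic configuration: a finite set of points, no three of which are collinear. -/
def GenericConfig (S : Set Pt) : Prop :=
  S.Finite ∧ ∀ p ∈ S, ∀ q ∈ S, ∀ r ∈ S, p ≠ q → p ≠ r → q ≠ r →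
    ¬ Collinear ℝ ({p, q, r} : Set Pt)

/-- A finite set of points is in convex position if every point of it is an extreme
point of its convex hull, i.e. lies outside the convex hull of the other points. -/
def ConvexPosition (S : Set Pt) : Prop :=
  ∀ p ∈ S, p ∉ convexHull ℝ (S \ {p})

variable {V : Type*} [Fintype V] [DecidableEq V]

/-- A rectilinear drawing of a graph on vertex set `V`: an injective placement of the
vertices in the plane whose image is a generic configuration. -/
def IsRectDrawing (f : V → Pt) : Prop :=
  Function.Injective f ∧ GenericConfig (Set.range f)

/-- `sepCount f s t` is `n(s,t)`: the number of (unordered) pairs of vertices, both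
different from `s` and `t`, whose drawn points span a line separating `f s` from `f t`. -/
def sepCount (f : V → Pt) (s t : V) : ℕ :=
  Set.ncard {e : Finset V | ∃ a b : V, e = {a, b} ∧ a ≠ b ∧ s ∉ e ∧ t ∉ e ∧
    Separates (lineThrough (f a) (f b)) (f s) (f t)}

theorem sepCount_symm (f : V → Pt) (s t : V) : sepCount f s t = sepCount f t s := by
  unfold sepCount
  congr 1
  ext e
  constructor
  · rintro ⟨a, b, rfl, hab, hs, ht, hsep⟩
    exact ⟨a, b, rfl, hab, ht, hs, hsep.symm⟩
  · rintro ⟨a, b, rfl, hab, ht, hs, hsep⟩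
    exact ⟨a, b, rfl, hab, hs, ht, hsep.symm⟩

/-- The crossing number `n(R(G))` of a drawing: the sum of `n(s,t)` over all edges. -/
def drawingCrossings (G : SimpleGraph V) (f : V → Pt) : ℕ :=
  ∑ e ∈ G.edgeSet.toFinite.toFinset,
    Sym2.lift ⟨fun s t => sepCount f s t, fun s t => sepCount_symm f s t⟩ e

/-- The Orchard crossing number: the minimum of `n(R(G))` over all rectilinear drawings. -/
def OCN (G : SimpleGraph V) : ℕ :=
  sInf {n | ∃ f : V → Pt, IsRectDrawing f ∧ drawingCrossings G f = n}

/-- The maximal Orchard crossing number: the maximum of `n(R(G))` over all drawings. -/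
def MOCN (G : SimpleGraph V) : ℕ :=
  sSup {n | ∃ f : V → Pt, IsRectDrawing f ∧ drawingCrossings G f = n}

/-- The open segment drawn for an edge. -/
def edgeSeg (f : V → Pt) (e : Sym2 V) : Set Pt :=
  Sym2.lift ⟨fun a b => openSegment ℝ (f a) (f b), fun a b => openSegment_symm ℝ (f a) (f b)⟩ e

/-- The number of unordered pairs of distinct edges of `G` whose drawn open segments
intersect. -/
def crossPairs (G : SimpleGraph V) (f : V → Pt) : ℕ :=
  Set.ncard {p : Finset (Sym2 V) | ∃ e₁ e₂ : Sym2 V, p = {e₁, e₂} ∧ e₁ ≠ e₂ ∧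
    e₁ ∈ G.edgeSet ∧ e₂ ∈ G.edgeSet ∧ (edgeSeg f e₁ ∩ edgeSeg f e₂).Nonempty}

/-- The rectilinear crossing number: the minimum number of crossing pairs of edges
over all rectilinear drawings. -/
def rcr (G : SimpleGraph V) : ℕ :=
  sInf {n | ∃ f : V → Pt, IsRectDrawing f ∧ crossPairs G f = n}

/-- The number of 4-element subsets of the drawn points which are in convex position. -/
def convexFour (f : V → Pt) : ℕ :=
  Set.ncard {Q : Finset Pt | Q.card = 4 ∧ (Q : Set Pt) ⊆ Set.range f ∧
    ConvexPosition (Q : Set Pt)}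

/-- The cyclic successor on `Fin n`. -/
def nextFin {n : ℕ} (i : Fin n) : Fin n :=
  ⟨(i.val + 1) % n, Nat.mod_lt _ (Nat.zero_lt_of_lt i.isLt)⟩

/-- The star graph `K_{n,1}` on `n+1` vertices: the center `0` is joined to each of
the `n` outer vertices. -/
def starGraph (n : ℕ) : SimpleGraph (Fin (n + 1)) :=
  SimpleGraph.fromEdgeSet {e | ∃ i : Fin n, e = s((0 : Fin (n + 1)), i.succ)}

/-- The wheel graph `W_{n,1}` on `n+1` vertices: a cycle on the `n` outer vertices
together with a hub `0` joined to each of them. -/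
def wheelGraph (n : ℕ) : SimpleGraph (Fin (n + 1)) :=
  SimpleGraph.fromEdgeSet
    ({e | ∃ i : Fin n, e = s((0 : Fin (n + 1)), i.succ)} ∪
     {e | ∃ i : Fin n, e = s(i.succ, (nextFin i).succ)})

/-- The cycle graph `C_n` on the outer vertices `1, …, n` of `Fin (n+1)`, together
with the isolated vertex `0`. -/
def cycleWithIsolated (n : ℕ) : SimpleGraph (Fin (n + 1)) :=
  SimpleGraph.fromEdgeSet {e | ∃ i : Fin n, e = s(i.succ, (nextFin i).succ)}

/-- `HullCycle f` says that for every `i`, all the other drawn points lie (strictly) on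
one side of the line through `f i` and `f (i+1)`; for an injective generic placement this
means the points are in convex position and occur around the convex hull exactly in the
cyclic order `f 0, f 1, …`. -/
def HullCycle {m : ℕ} (f : Fin m → Pt) : Prop :=
  ∀ i j l : Fin m, j ≠ i → j ≠ nextFin i → l ≠ i → l ≠ nextFin i →
    ¬ Separates (lineThrough (f i) (f (nextFin i))) (f j) (f l)

end

/-!
The crossings can be counted one four-element set of vertices at a time: a line through two drawn
points separating two others involves exactly four points. Four points of the plane have an affine
dependence, and if no three are collinear then all four weights are nonzero. An affine functional
vanishing on the line through two of the points shows that this line separates the other two iff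
their weights have the same sign. The signs split as `1 + 3` or `2 + 2`, which gives `C(1,2) +
C(3,2) = 3` or `C(2,2) + C(2,2) = 2` separated pairs; in convex position a `1 + 3` split is
impossible, since the point with the isolated sign is a convex combination of the other three.
-/

open Finset

section Lines

theorem mem_lineThrough_iff {p q : Pt} (hpq : p ≠ q) (x : Pt) :
    x ∈ lineThrough p q ↔ (q.1 - p.1) * (x.2 - p.2) = (q.2 - p.2) * (x.1 - p.1) := by
  rw [lineThrough, SetLike.mem_coe, mem_affineSpan_pair_iff_exists_lineMap_eq]
  constructor
  · rintro ⟨c, rfl⟩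
    simp only [AffineMap.lineMap_apply_module', Prod.fst_add, Prod.snd_add, Prod.smul_fst,
      Prod.smul_snd, Prod.fst_sub, Prod.snd_sub, smul_eq_mul]
    ring
  · intro hx
    have hnorm : (q.1 - p.1) ^ 2 + (q.2 - p.2) ^ 2 ≠ 0 := by
      contrapose! hpq
      exact Prod.ext (by nlinarith) (by nlinarith)
    refine ⟨((q.1 - p.1) * (x.1 - p.1) + (q.2 - p.2) * (x.2 - p.2)) /
      ((q.1 - p.1) ^ 2 + (q.2 - p.2) ^ 2), Prod.ext ?_ ?_⟩
    · simp only [AffineMap.lineMap_apply_module', Prod.fst_add, Prod.smul_fst, Prod.fst_sub,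
        smul_eq_mul]
      field_simp
      linear_combination (q.2 - p.2) * hx
    · simp only [AffineMap.lineMap_apply_module', Prod.snd_add, Prod.smul_snd, Prod.snd_sub,
        smul_eq_mul]
      field_simp
      linear_combination -(q.1 - p.1) * hx

theorem exists_affineMap_lineThrough_eq {p q : Pt} (hpq : p ≠ q) :
    ∃ φ : Pt →ᵃ[ℝ] ℝ, lineThrough p q = {x | φ x = 0} := by
  let ψ : Pt →ₗ[ℝ] ℝ :=
    (q.1 - p.1) • LinearMap.snd ℝ ℝ ℝ - (q.2 - p.2) • LinearMap.fst ℝ ℝ ℝ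
  refine ⟨ψ.toAffineMap - AffineMap.const ℝ Pt (ψ p), Set.ext fun x => ?_⟩
  simp only [mem_lineThrough_iff hpq, Set.mem_ofPred_eq, AffineMap.coe_sub,
    LinearMap.coe_toAffineMap, AffineMap.coe_const, Pi.sub_apply, Function.const_apply, ψ,
    LinearMap.sub_apply, LinearMap.smul_apply, LinearMap.fst_apply, LinearMap.snd_apply,
    smul_eq_mul]
  constructor <;> intro h <;> linarith

theorem not_separates_of_convex {L C : Set Pt} {r s : Pt} (hC : Convex ℝ C) (hCL : C ⊆ Lᶜ)
    (hr : r ∈ C) (hs : s ∈ C) : ¬ Separates L r s := fun hsep =>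
  hsep.2.2 <| connectedComponentIn_eq <|
    hC.isPreconnected.subset_connectedComponentIn hr hCL hs

theorem separates_of_neg_of_pos {φ : Pt →ᵃ[ℝ] ℝ} {r s : Pt} (hr : φ r < 0) (hs : 0 < φ s) :
    Separates {x | φ x = 0} r s := by
  refine ⟨hr.ne, hs.ne', fun heq => ?_⟩
  set C := connectedComponentIn {x | φ x = 0}ᶜ r
  have hrC : r ∈ C := mem_connectedComponentIn hr.ne
  have hsC : s ∈ C := heq ▸ mem_connectedComponentIn hs.ne'
  obtain ⟨x, hxC, hx⟩ : (0 : ℝ) ∈ φ '' C :=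
    isPreconnected_connectedComponentIn.intermediate_value hrC hsC
      φ.continuous_of_finiteDimensional.continuousOn ⟨hr.le, hs.le⟩
  exact connectedComponentIn_subset _ _ hxC hx

theorem separates_zeroSet_iff (φ : Pt →ᵃ[ℝ] ℝ) {r s : Pt} :
    Separates {x | φ x = 0} r s ↔ φ r * φ s < 0 := by
  constructor
  · intro hsep
    by_contra! hnonneg
    have hne : φ r * φ s ≠ 0 := mul_ne_zero hsep.1 hsep.2.1
    rcases mul_pos_iff.1 (hnonneg.lt_of_ne' hne) with ⟨hr, hs⟩ | ⟨hr, hs⟩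
    · exact not_separates_of_convex ((convex_Ioi (0 : ℝ)).affine_preimage φ)
        (fun x hx => (ne_of_gt hx : φ x ≠ 0)) hr hs hsep
    · exact not_separates_of_convex ((convex_Iio (0 : ℝ)).affine_preimage φ)
        (fun x hx => (ne_of_lt hx : φ x ≠ 0)) hr hs hsep
  · intro hneg
    rcases mul_neg_iff.1 hneg with ⟨hr, hs⟩ | ⟨hr, hs⟩
    · exact (separates_of_neg_of_pos hs hr).symm
    · exact separates_of_neg_of_pos hr hs

theorem GenericConfig.notMem_lineThrough {S : Set Pt} (hS : GenericConfig S) {p q r : Pt}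
    (hp : p ∈ S) (hq : q ∈ S) (hr : r ∈ S) (hpq : p ≠ q) (hpr : p ≠ r) (hqr : q ≠ r) :
    r ∉ lineThrough p q := fun hmem =>
  hS.2 r hr p hp q hq hpr.symm hqr.symm hpq (collinear_insert_of_mem_affineSpan_pair hmem)

end Lines

section ConvexPosition

theorem ConvexPosition.mono {S T : Set Pt} (hT : ConvexPosition T) (hST : S ⊆ T) :
    ConvexPosition S := fun p hp hmem =>
  hT p (hST hp) (convexHull_mono (Set.sdiff_subset_sdiff_left hST) hmem)

theorem ConvexPosition.genericConfig {S : Set Pt} (hS : ConvexPosition S) (hfin : S.Finite) :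
    GenericConfig S := by
  have not_wbtw : ∀ {x y z : Pt}, x ∈ S → y ∈ S → z ∈ S → x ≠ y → z ≠ y → ¬ Wbtw ℝ x y z :=
    fun hx hy hz hxy hzy h =>
      hS _ hy (segment_subset_convexHull (Set.mem_sdiff_singleton.2 ⟨hx, hxy⟩)
        (Set.mem_sdiff_singleton.2 ⟨hz, hzy⟩) h.mem_segment)
  refine ⟨hfin, fun p hp q hq r hr hpq hpr hqr hcol => ?_⟩
  rcases hcol.wbtw_or_wbtw_or_wbtw with h | h | h
  · exact not_wbtw hp hq hr hpq hqr.symm h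
  · exact not_wbtw hq hr hp hqr hpr h
  · exact not_wbtw hr hp hq hpr.symm hpq.symm h

theorem convexPosition_parabola : ConvexPosition (Set.range fun x : ℝ => (x, x ^ 2)) := by
  rintro _ ⟨a, rfl⟩ hmem
  -- The tangent at `a` is a supporting line meeting the parabola only there.
  let height : Pt →ₗ[ℝ] ℝ := LinearMap.snd ℝ ℝ ℝ - (2 * a) • LinearMap.fst ℝ ℝ ℝ
  have height_apply (x : Pt) : height x = x.2 - 2 * a * x.1 := rfl
  have habove : convexHull ℝ ((Set.range fun x : ℝ => (x, x ^ 2)) \ {(a, a ^ 2)}) ⊆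
      {x | -a ^ 2 < height x} := by
    refine convexHull_min ?_ (convex_halfSpace_gt height.isLinear _)
    rintro _ ⟨⟨b, rfl⟩, hb⟩
    have hba : b - a ≠ 0 := fun h => hb (by rw [sub_eq_zero.1 h]; rfl)
    have := sq_pos_of_ne_zero hba
    simp only [Set.mem_ofPred_eq, height_apply]
    linarith
  have hheight : -a ^ 2 < height (a, a ^ 2) := habove hmem
  rw [height_apply] at hheight
  linarith

theorem exists_injective_convexPosition_range (V : Type*) [Finite V] :
    ∃ f : V → Pt, Function.Injective f ∧ ConvexPosition (Set.range f) := by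
  obtain ⟨n, ⟨e⟩⟩ := Finite.exists_equiv_fin V
  refine ⟨fun v => ((e v : ℝ), (e v : ℝ) ^ 2), fun u v huv => ?_, convexPosition_parabola.mono ?_⟩
  · simpa [Fin.val_inj] using congrArg Prod.fst huv
  · rintro _ ⟨v, rfl⟩
    exact ⟨(e v : ℝ), rfl⟩

end ConvexPosition

section AffineDependence

/-- The weights `w` form a nontrivial affine dependence of the points `f v`, `v ∈ Q`. Values of `w`
outside `Q` are irrelevant. The signs of the weights give a Radon partition of the points. -/
structure IsAffineDependence {V E : Type*} [AddCommGroup E] [Module ℝ E]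
    (Q : Finset V) (f : V → E) (w : V → ℝ) : Prop where
  sum_eq_zero : ∑ v ∈ Q, w v = 0
  sum_smul_eq_zero : ∑ v ∈ Q, w v • f v = 0
  exists_ne_zero : ∃ v ∈ Q, w v ≠ 0

namespace IsAffineDependence

variable {V E : Type*} [AddCommGroup E] [Module ℝ E] {Q : Finset V} {f : V → E} {w : V → ℝ}

theorem neg (hw : IsAffineDependence Q f w) : IsAffineDependence Q f (-w) where
  sum_eq_zero := by simp [hw.sum_eq_zero]
  sum_smul_eq_zero := by simp [hw.sum_smul_eq_zero]
  exists_ne_zero := by simpa using hw.exists_ne_zero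

theorem sum_mul_affineMap_eq_zero (hw : IsAffineDependence Q f w) (φ : E →ᵃ[ℝ] ℝ) :
    ∑ v ∈ Q, w v * φ (f v) = 0 := by
  have hφ : ∀ v, w v * φ (f v) = φ.linear (w v • f v) + w v * φ 0 := fun v => by
    rw [congrFun φ.decomp (f v), Pi.add_apply, map_smul, smul_eq_mul, mul_add]
  simp_rw [hφ, sum_add_distrib, ← map_sum, ← sum_mul, hw.sum_smul_eq_zero,
    hw.sum_eq_zero, map_zero, zero_mul, add_zero]

theorem mem_convexHull_of_forall_nonpos [DecidableEq V] (hw : IsAffineDependence Q f w) {p : V}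
    (hp : p ∈ Q) (hwp : 0 < w p) (hneg : ∀ v ∈ Q, v ≠ p → w v ≤ 0) :
    f p ∈ convexHull ℝ (f '' (Q.erase p)) := by
  have hsum : ∑ v ∈ Q.erase p, w v = -w p := by
    linarith [add_sum_erase Q w hp, hw.sum_eq_zero]
  have hsmul : ∑ v ∈ Q.erase p, w v • f v = -w p • f p := by
    rw [neg_smul, eq_neg_iff_add_eq_zero, sum_erase_add _ _ hp, hw.sum_smul_eq_zero]
  have hcenter : (Q.erase p).centerMass w f = f p := by
    rw [centerMass, hsum, hsmul, inv_smul_smul₀ (neg_ne_zero.2 hwp.ne')]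
  rw [← hcenter]
  exact centerMass_mem_convexHull_of_nonpos _
    (fun v hv => hneg v (mem_of_mem_erase hv) (ne_of_mem_erase hv)) (by rw [hsum]; linarith)
    fun v hv => ⟨v, hv, rfl⟩

theorem exists_pos (hw : IsAffineDependence Q f w) : ∃ v ∈ Q, 0 < w v :=
  exists_pos_of_sum_zero_of_exists_nonzero w hw.sum_eq_zero hw.exists_ne_zero

end IsAffineDependence

theorem exists_isAffineDependence {V E : Type*} [AddCommGroup E] [Module ℝ E]
    [FiniteDimensional ℝ E] {Q : Finset V} {f : V → E} (hf : Set.InjOn f Q)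
    (hQ : Module.finrank ℝ E + 1 < #Q) :
    ∃ w : V → ℝ, IsAffineDependence Q f w := by
  classical
  rw [← card_image_of_injOn hf] at hQ
  obtain ⟨w, hsmul, hsum, x, hx, hwx⟩ :=
    Module.exists_nontrivial_relation_sum_zero_of_finrank_succ_lt_card hQ
  obtain ⟨v, hv, rfl⟩ := mem_image.1 hx
  rw [sum_image hf] at hsmul hsum
  exact ⟨w ∘ f, hsum, hsmul, v, hv, hwx⟩

theorem ConvexPosition.two_le_card_pos {V : Type*} {Q : Finset V} {f : V → Pt} {w : V → ℝ}
    (hf : Function.Injective f) (hconv : ConvexPosition (Set.range f))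
    (hw : IsAffineDependence Q f w) : 2 ≤ #{v ∈ Q | 0 < w v} := by
  classical
  obtain ⟨p, hp, hwp⟩ := hw.exists_pos
  by_contra! hlt
  have hnonpos : ∀ v ∈ Q, v ≠ p → w v ≤ 0 := fun v hv hvp => by
    by_contra! hwv
    exact hlt.not_ge (one_lt_card.2 ⟨v, by simp [hv, hwv], p, by simp [hp, hwp], hvp⟩)
  refine hconv (f p) ⟨p, rfl⟩
    (convexHull_mono ?_ (hw.mem_convexHull_of_forall_nonpos hp hwp hnonpos))
  rintro _ ⟨v, hv, rfl⟩
  exact ⟨⟨v, rfl⟩, hf.ne (ne_of_mem_erase hv)⟩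

end AffineDependence

section Counting

theorem sum_powersetCard_powersetCard_sdiff {α M : Type*} [DecidableEq α] [AddCommMonoid M]
    (S : Finset α) (k l : ℕ) (g : Finset α → Finset α → M) :
    ∑ P ∈ S.powersetCard k, ∑ L ∈ (S \ P).powersetCard l, g P L =
      ∑ Q ∈ S.powersetCard (k + l), ∑ P ∈ Q.powersetCard k, g P (Q \ P) := by
  rw [sum_sigma', sum_sigma']
  refine sum_bij' (fun x _ => ⟨x.1 ∪ x.2, x.1⟩) (fun y _ => ⟨y.2, y.1 \ y.2⟩) ?_ ?_ ?_ ?_ ?_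
  · rintro ⟨P, L⟩ hPL
    simp only [mem_sigma, mem_powersetCard, subset_sdiff] at hPL ⊢
    obtain ⟨⟨hP, hPk⟩, ⟨hL, hdisj⟩, hLl⟩ := hPL
    exact ⟨⟨union_subset hP hL, by rw [card_union_of_disjoint hdisj.symm, hPk, hLl]⟩,
      subset_union_left, hPk⟩
  · rintro ⟨Q, P⟩ hQP
    simp only [mem_sigma, mem_powersetCard] at hQP ⊢
    obtain ⟨⟨hQ, hQkl⟩, hP, hPk⟩ := hQP
    exact ⟨⟨hP.trans hQ, hPk⟩, sdiff_subset_sdiff hQ subset_rfl,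
      by rw [card_sdiff_of_subset hP, hQkl, hPk, Nat.add_sub_cancel_left]⟩
  · rintro ⟨P, L⟩ hPL
    simp only [mem_sigma, mem_powersetCard, subset_sdiff] at hPL
    simp [union_sdiff_cancel_left hPL.2.1.2.symm]
  · rintro ⟨Q, P⟩ hQP
    simp only [mem_sigma, mem_powersetCard] at hQP
    simp [union_sdiff_of_subset hQP.2.1]
  · rintro ⟨P, L⟩ hPL
    simp only [mem_sigma, mem_powersetCard, subset_sdiff] at hPL
    simp [union_sdiff_cancel_left hPL.2.1.2.symm]

theorem sum_edgeSet_top_toFinset {V M : Type*} [Fintype V] [DecidableEq V] [AddCommMonoid M]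
    (g : Finset V → M) :
    ∑ e ∈ (⊤ : SimpleGraph V).edgeSet.toFinite.toFinset, g e.toFinset =
      ∑ P ∈ (univ : Finset V).powersetCard 2, g P := by
  refine sum_nbij Sym2.toFinset ?_ ?_ ?_ fun _ _ => rfl
  · intro e he
    simpa using Sym2.card_toFinset_of_not_isDiag e (by simpa using he)
  · intro e _ e' _ h
    exact Sym2.ext fun v => by rw [← Sym2.mem_toFinset, h, Sym2.mem_toFinset]
  · intro P hP
    obtain ⟨s, t, hst, rfl⟩ := card_eq_two.1 (mem_powersetCard.1 hP).2
    exact ⟨s(s, t), by simpa using hst, Sym2.toFinset_mk_eq⟩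

theorem card_filter_monochromatic_powersetCard {α : Type*} (Q : Finset α)
    (p : α → Prop) [DecidablePred p] {k : ℕ} (hk : k ≠ 0) :
    #{P ∈ Q.powersetCard k | (∀ v ∈ P, p v) ∨ ∀ v ∈ P, ¬p v} =
      (#{v ∈ Q | p v}).choose k + (#{v ∈ Q | ¬p v}).choose k := by
  classical
  rw [← card_powersetCard, ← card_powersetCard, ← card_union_of_disjoint]
  · congr 1
    ext P
    simp only [mem_filter, mem_union, mem_powersetCard, subset_iff]
    grind
  · rw [disjoint_left]
    intro P hP hP'
    rw [mem_powersetCard] at hP hP'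
    obtain ⟨v, hv⟩ : P.Nonempty := card_pos.1 (by omega)
    exact (mem_filter.1 (hP'.1 hv)).2 (mem_filter.1 (hP.1 hv)).2

end Counting

section Drawings

variable {V : Type*}

/-- The line spanned by the drawn pair `L` separates the two drawn points of the pair `P`. Phrased
through finsets, so that no ordering of either pair has to be chosen. -/
def LineSeparates (f : V → Pt) (L P : Finset V) : Prop :=
  ∃ s ∈ P, ∃ t ∈ P, Separates (affineSpan ℝ (f '' L)) (f s) (f t)

variable [DecidableEq V]

theorem lineSeparates_pair_right {f : V → Pt} {L : Finset V} {s t : V} :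
    LineSeparates f L {s, t} ↔ Separates (affineSpan ℝ (f '' L)) (f s) (f t) := by
  have not_self : ∀ v, ¬ Separates (affineSpan ℝ (f '' L)) (f v) (f v) := fun v h => h.2.2 rfl
  simp only [LineSeparates, mem_insert, mem_singleton]
  constructor
  · rintro ⟨_, rfl | rfl, _, rfl | rfl, h⟩
    exacts [(not_self _ h).elim, h, h.symm, (not_self _ h).elim]
  · exact fun h => ⟨s, .inl rfl, t, .inr rfl, h⟩

theorem affineSpan_image_pair (f : V → Pt) (a b : V) :
    (affineSpan ℝ (f '' ({a, b} : Finset V)) : Set Pt) = lineThrough (f a) (f b) := by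
  rw [lineThrough, coe_pair, Set.image_pair]

open Classical in
theorem sepCount_eq_card [Fintype V] (f : V → Pt) (s t : V) :
    sepCount f s t =
      #{L ∈ (univ \ {s, t}).powersetCard 2 | LineSeparates f L {s, t}} := by
  rw [sepCount, ← Set.ncard_coe_finset]
  congr 1
  ext L
  simp only [Set.mem_ofPred_eq, coe_filter, mem_powersetCard, subset_sdiff,
    subset_univ, true_and, disjoint_insert_right, disjoint_singleton_right,
    card_eq_two, lineSeparates_pair_right]
  constructor
  · rintro ⟨a, b, rfl, hab, hs, ht, hsep⟩
    exact ⟨⟨⟨hs, ht⟩, a, b, hab, rfl⟩, by rwa [affineSpan_image_pair]⟩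
  · rintro ⟨⟨⟨hs, ht⟩, a, b, hab, rfl⟩, hsep⟩
    exact ⟨a, b, rfl, hab, hs, ht, by rwa [affineSpan_image_pair] at hsep⟩

open Classical in
/-- The pairs in `Q` separated by the line through the other drawn points of `Q`; meant for `Q` of
size four, where those other points form a pair too. -/
noncomputable def separatedPairs (f : V → Pt) (Q : Finset V) : Finset (Finset V) :=
  {P ∈ Q.powersetCard 2 | LineSeparates f (Q \ P) P}

theorem drawingCrossings_top_eq_sum [Fintype V] (f : V → Pt) :
    drawingCrossings (⊤ : SimpleGraph V) f =
      ∑ Q ∈ (univ : Finset V).powersetCard 4, #(separatedPairs f Q) := by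
  classical
  calc drawingCrossings (⊤ : SimpleGraph V) f
      = ∑ e ∈ (⊤ : SimpleGraph V).edgeSet.toFinite.toFinset,
          #{L ∈ (univ \ e.toFinset).powersetCard 2 | LineSeparates f L e.toFinset} := by
        refine sum_congr rfl fun e _ => ?_
        induction e with | _ s t =>
          rw [Sym2.lift_mk, Sym2.toFinset_mk_eq]
          exact sepCount_eq_card f s t
    _ = ∑ P ∈ (univ : Finset V).powersetCard 2, ∑ L ∈ (univ \ P).powersetCard 2,
          if LineSeparates f L P then 1 else 0 := by
        rw [sum_edgeSet_top_toFinset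
          fun P => #{L ∈ (univ \ P).powersetCard 2 | LineSeparates f L P}]
        simp only [card_filter]
    _ = ∑ Q ∈ (univ : Finset V).powersetCard 4, #(separatedPairs f Q) := by
        rw [sum_powersetCard_powersetCard_sdiff univ 2 2
          fun P L => if LineSeparates f L P then 1 else 0]
        simp only [separatedPairs, card_filter]

end Drawings

section FourPoints

variable {V : Type*} {f : V → Pt} {Q : Finset V} {w : V → ℝ}

/-- An affine functional vanishing on the line through the two points of `Q \ {s, t}` turns the
affine dependence into a relation between its values at `f s` and `f t`. -/
theorem IsAffineDependence.exists_mul_add_mul_eq_zero [DecidableEq V]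
    (hw : IsAffineDependence Q f w) (hf : IsRectDrawing f) (hQ : #Q = 4) {s t : V}
    (hs : s ∈ Q) (ht : t ∈ Q) (hst : s ≠ t) :
    ∃ x y : ℝ, x ≠ 0 ∧ y ≠ 0 ∧ w s * x + w t * y = 0 ∧
      (LineSeparates f (Q \ {s, t}) {s, t} ↔ x * y < 0) := by
  have hP : {s, t} ⊆ Q := by simp [insert_subset_iff, hs, ht]
  obtain ⟨a, b, hab, hL⟩ : ∃ a b, a ≠ b ∧ Q \ {s, t} = {a, b} :=
    card_eq_two.1 (by rw [card_sdiff_of_subset hP, hQ, card_pair hst])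
  have hdisj : Disjoint {a, b} {s, t} := hL ▸ sdiff_disjoint
  simp only [disjoint_insert_right, disjoint_singleton_right, mem_insert,
    mem_singleton, not_or] at hdisj
  obtain ⟨⟨hsa, hsb⟩, hta, htb⟩ := hdisj
  obtain ⟨φ, hφ⟩ := exists_affineMap_lineThrough_eq (hf.1.ne hab)
  have hφ_ne : ∀ v, v ≠ a → v ≠ b → φ (f v) ≠ 0 := fun v hav hbv hv =>
    hf.2.notMem_lineThrough ⟨a, rfl⟩ ⟨b, rfl⟩ ⟨v, rfl⟩ (hf.1.ne hab) (hf.1.ne hav.symm)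
      (hf.1.ne hbv.symm) (hφ ▸ hv)
  have hφa : φ (f a) = 0 := hφ.subset (left_mem_affineSpan_pair ℝ _ _)
  have hφb : φ (f b) = 0 := hφ.subset (right_mem_affineSpan_pair ℝ _ _)
  refine ⟨φ (f s), φ (f t), hφ_ne s hsa hsb, hφ_ne t hta htb, ?_, ?_⟩
  · rw [← hw.sum_mul_affineMap_eq_zero φ, ← sum_sdiff hP, hL, sum_pair hab,
      sum_pair hst, hφa, hφb, mul_zero, mul_zero, add_zero, zero_add]
  · rw [lineSeparates_pair_right, hL, affineSpan_image_pair, hφ, separates_zeroSet_iff]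

theorem IsAffineDependence.ne_zero (hw : IsAffineDependence Q f w) (hf : IsRectDrawing f)
    (hQ : #Q = 4) {s : V} (hs : s ∈ Q) : w s ≠ 0 := by
  classical
  intro hws
  obtain ⟨t, ht, hwt⟩ := hw.exists_ne_zero
  have hst : s ≠ t := fun h => hwt (h ▸ hws)
  obtain ⟨x, y, -, hy, hxy, -⟩ := hw.exists_mul_add_mul_eq_zero hf hQ hs ht hst
  simp_all

theorem IsAffineDependence.lineSeparates_iff [DecidableEq V] (hw : IsAffineDependence Q f w)
    (hf : IsRectDrawing f) (hQ : #Q = 4) {P : Finset V} (hP : P ∈ Q.powersetCard 2) :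
    LineSeparates f (Q \ P) P ↔ (∀ v ∈ P, 0 < w v) ∨ ∀ v ∈ P, ¬0 < w v := by
  obtain ⟨hPQ, hP2⟩ := mem_powersetCard.1 hP
  obtain ⟨s, t, hst, rfl⟩ := card_eq_two.1 hP2
  have hs : s ∈ Q := hPQ (by simp)
  have ht : t ∈ Q := hPQ (by simp)
  have hws : w s ≠ 0 := hw.ne_zero hf hQ hs
  have hwt : w t ≠ 0 := hw.ne_zero hf hQ ht
  obtain ⟨x, y, -, hy, hxy, hsep⟩ := hw.exists_mul_add_mul_eq_zero hf hQ hs ht hst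
  have hsign : x * y < 0 ↔ 0 < w s * w t := by
    have hsq : w s * w t * y ^ 2 = w s ^ 2 * -(x * y) := by
      linear_combination w s * y * hxy
    rw [← mul_pos_iff_of_pos_right (sq_pos_of_ne_zero hy), hsq,
      mul_pos_iff_of_pos_left (sq_pos_of_ne_zero hws), neg_pos]
  simp [hsep, hsign, mul_pos_iff, hws.le_iff_lt, hwt.le_iff_lt]

theorem IsAffineDependence.card_separatedPairs [DecidableEq V] (hw : IsAffineDependence Q f w)
    (hf : IsRectDrawing f) (hQ : #Q = 4) :
    #(separatedPairs f Q) =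
      (#{v ∈ Q | 0 < w v}).choose 2 + (#{v ∈ Q | ¬0 < w v}).choose 2 := by
  classical
  rw [← card_filter_monochromatic_powersetCard Q _ two_ne_zero, separatedPairs]
  congr 1
  exact filter_congr fun P hP => hw.lineSeparates_iff hf hQ hP

theorem two_le_card_separatedPairs [DecidableEq V] (hf : IsRectDrawing f) (hQ : #Q = 4) :
    2 ≤ #(separatedPairs f Q) := by
  obtain ⟨w, hw⟩ := exists_isAffineDependence (Q := Q) hf.1.injOn (by simp [hQ])
  have hpos : 0 < #{v ∈ Q | 0 < w v} := by
    obtain ⟨v, hv, hwv⟩ := hw.exists_pos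
    exact card_pos.2 ⟨v, by simp [hv, hwv]⟩
  have hnonpos : 0 < #{v ∈ Q | ¬0 < w v} := by
    obtain ⟨v, hv, hwv⟩ := hw.neg.exists_pos
    exact card_pos.2 ⟨v, by simpa [hv] using (neg_pos.1 hwv).le⟩
  have hadd := card_filter_add_card_filter_not (s := Q) (fun v => 0 < w v)
  obtain ⟨hm, hn⟩ | ⟨hm, hn⟩ | ⟨hm, hn⟩ :
      (#{v ∈ Q | 0 < w v} = 1 ∧ #{v ∈ Q | ¬0 < w v} = 3) ∨
      (#{v ∈ Q | 0 < w v} = 2 ∧ #{v ∈ Q | ¬0 < w v} = 2) ∨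
      (#{v ∈ Q | 0 < w v} = 3 ∧ #{v ∈ Q | ¬0 < w v} = 1) := by omega
  all_goals
    rw [hw.card_separatedPairs hf hQ, hm, hn]
    decide

theorem card_separatedPairs_of_convexPosition [DecidableEq V] [Finite V]
    (hf : Function.Injective f) (hconv : ConvexPosition (Set.range f)) (hQ : #Q = 4) :
    #(separatedPairs f Q) = 2 := by
  obtain ⟨w, hw⟩ := exists_isAffineDependence (Q := Q) hf.injOn (by simp [hQ])
  have hdraw : IsRectDrawing f := ⟨hf, hconv.genericConfig (Set.finite_range f)⟩
  have hpos : 2 ≤ #{v ∈ Q | 0 < w v} := hconv.two_le_card_pos hf hw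
  have hnonpos : 2 ≤ #{v ∈ Q | ¬0 < w v} :=
    (hconv.two_le_card_pos hf hw.neg).trans <| card_le_card <|
      monotone_filter_right Q fun v _ hv => (neg_pos.1 hv).not_gt
  have hadd := card_filter_add_card_filter_not (s := Q) (fun v => 0 < w v)
  have hpos_eq : #{v ∈ Q | 0 < w v} = 2 := by omega
  have hnonpos_eq : #{v ∈ Q | ¬0 < w v} = 2 := by omega
  rw [hw.card_separatedPairs hdraw hQ, hpos_eq, hnonpos_eq, Nat.choose_self]

end FourPoints

section CompleteGraph

variable {V : Type*} [Fintype V] [DecidableEq V]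

theorem two_mul_choose_le_drawingCrossings_top {f : V → Pt} (hf : IsRectDrawing f) :
    2 * (Fintype.card V).choose 4 ≤ drawingCrossings (⊤ : SimpleGraph V) f := by
  rw [drawingCrossings_top_eq_sum, mul_comm, ← card_univ, ← card_powersetCard,
    ← smul_eq_mul]
  exact card_nsmul_le_sum _ _ _ fun Q hQ =>
    two_le_card_separatedPairs hf (mem_powersetCard.1 hQ).2

theorem drawingCrossings_top_of_convexPosition {f : V → Pt} (hf : Function.Injective f)
    (hconv : ConvexPosition (Set.range f)) :
    drawingCrossings (⊤ : SimpleGraph V) f = 2 * (Fintype.card V).choose 4 := by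
  rw [drawingCrossings_top_eq_sum, sum_congr rfl fun Q hQ =>
    card_separatedPairs_of_convexPosition hf hconv (mem_powersetCard.1 hQ).2,
    sum_const, card_powersetCard, card_univ, smul_eq_mul, mul_comm]

end CompleteGraph

theorem stmt_0_general (V : Type*) [Fintype V] [DecidableEq V] :
    OCN (⊤ : SimpleGraph V) = 2 * (Fintype.card V).choose 4 ∧
    ∀ f : V → Pt, Function.Injective f → ConvexPosition (Set.range f) →
      drawingCrossings (⊤ : SimpleGraph V) f = 2 * (Fintype.card V).choose 4 := by
  refine ⟨?_, fun f hf hconv => drawingCrossings_top_of_convexPosition hf hconv⟩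
  obtain ⟨f, hf, hconv⟩ := exists_injective_convexPosition_range V
  have hdraw : IsRectDrawing f := ⟨hf, hconv.genericConfig (Set.finite_range f)⟩
  refine IsLeast.csInf_eq ⟨⟨f, hdraw, drawingCrossings_top_of_convexPosition hf hconv⟩, ?_⟩
  rintro _ ⟨g, hg, rfl⟩
  exact two_mul_choose_le_drawingCrossings_top hg

/-- For n ≥ 4, `OCN(K_n) = 2 * C(n,4)`, and the minimum is attained by
any rectilinear drawing placing all vertices in convex position. -/
theorem stmt_0 (n : ℕ) (hn : 4 ≤ n) :
    OCN (⊤ : SimpleGraph (Fin n)) = 2 * Nat.choose n 4 ∧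
    ∀ f : Fin n → Pt, IsRectDrawing f → ConvexPosition (Set.range f) →
      drawingCrossings (⊤ : SimpleGraph (Fin n)) f = 2 * Nat.choose n 4 := by
  have h := stmt_0_general (Fin n)
  rw [Fintype.card_fin] at h
  exact ⟨h.1, fun f hf => h.2 f hf.1⟩
end

section
/- For every odd natural number n ≥ 3, the Orchard crossing number of the star graph K_{n,1} equals n(n−1)(n−3)/8. -/
/-!
For points `p i` in general position around a centre `o`, let `i → j` mean that `p j` is
counterclockwise from `p i` as seen from `o`; this is a tournament. Consider the separations of `o`
from a point `p i` by the line through two others, triple by triple. If the tournament is cyclic on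
the triple, then `o` lies inside the triangle and there is none. If it is transitive, `i → j → k`
and `i → k`, then there is one separation when `o, p i, p j, p k` form a convex quadrilateral and
there are two when it is reflex at `p j`. So the star has `∑ i, (d i).choose 2` crossings, counting
each transitive triple at its source of out-degree `d i`, plus one for each reflex quadrilateral.
For `2 * m + 1` outer points the out-degrees have mean `m`, and convexity bounds the number of
crossings below by `(2 * m + 1) * m.choose 2`. A regular polygon around its centre attains the
bound: its out-degrees are all `m`, and a point on the circle never lies inside the triangle formed
by the centre and two others.
-/

section OrchardStar

open Finset

section Orientation

/-- Twice the signed area of the triangle `a b c`: positive when the triangle is traversed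
counterclockwise, zero when the three points are collinear. -/
def orient (a b c : Pt) : ℝ :=
  (b.1 - a.1) * (c.2 - a.2) - (b.2 - a.2) * (c.1 - a.1)

theorem orient_swap_left (a b c : Pt) : orient b a c = -orient a b c := by
  unfold orient; ring

theorem orient_swap_right (a b c : Pt) : orient a c b = -orient a b c := by
  unfold orient; ring

theorem orient_rotate (a b c : Pt) : orient b c a = orient a b c := by
  unfold orient; ring

@[simp] theorem orient_self_left (a b : Pt) : orient a a b = 0 := by
  simp [orient]

@[simp] theorem orient_self_right (a b : Pt) : orient a b b = 0 := by
  rw [← orient_rotate, orient_self_left]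

@[simp] theorem orient_self_outer (a b : Pt) : orient a b a = 0 := by
  rw [orient_rotate, orient_self_left]

theorem orient_eq_add (o a b c : Pt) :
    orient a b c = orient o a b + orient o b c + orient o c a := by
  unfold orient; ring

theorem exists_affineMap_eq_orient (a b : Pt) : ∃ φ : Pt →ᵃ[ℝ] ℝ, ⇑φ = orient a b := by
  let ℓ : Pt →ₗ[ℝ] ℝ :=
    (b.1 - a.1) • LinearMap.snd ℝ ℝ ℝ - (b.2 - a.2) • LinearMap.fst ℝ ℝ ℝ
  refine ⟨ℓ.toAffineMap - AffineMap.const ℝ Pt (ℓ a), funext fun c => ?_⟩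
  simp only [ℓ, orient, AffineMap.coe_sub, LinearMap.coe_toAffineMap, AffineMap.coe_const,
    Pi.sub_apply, Function.const_apply, LinearMap.sub_apply, LinearMap.smul_apply,
    LinearMap.fst_apply, LinearMap.snd_apply, smul_eq_mul]
  ring

theorem mem_lineThrough_iff_s4 {a b : Pt} (hab : a ≠ b) (c : Pt) :
    c ∈ lineThrough a b ↔ orient a b c = 0 := by
  rw [lineThrough, SetLike.mem_coe, mem_affineSpan_pair_iff_exists_lineMap_eq]
  constructor
  · rintro ⟨r, rfl⟩
    simp only [orient, AffineMap.fst_lineMap, AffineMap.snd_lineMap, AffineMap.lineMap_apply_ring']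
    ring
  · intro hc
    have hb : (b.1 - a.1) ^ 2 + (b.2 - a.2) ^ 2 ≠ 0 := fun h => hab <|
      Prod.ext (by nlinarith [sq_nonneg (b.2 - a.2)]) (by nlinarith [sq_nonneg (b.1 - a.1)])
    unfold orient at hc
    refine ⟨((b.1 - a.1) * (c.1 - a.1) + (b.2 - a.2) * (c.2 - a.2)) /
      ((b.1 - a.1) ^ 2 + (b.2 - a.2) ^ 2), Prod.ext ?_ ?_⟩ <;>
    · simp only [AffineMap.fst_lineMap, AffineMap.snd_lineMap, AffineMap.lineMap_apply_ring']
      field_simp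
      grind

theorem collinear_iff_orient_eq_zero {a b : Pt} (hab : a ≠ b) (c : Pt) :
    Collinear ℝ {a, b, c} ↔ orient a b c = 0 := by
  rw [← mem_lineThrough_iff_s4 hab, lineThrough, SetLike.mem_coe]
  constructor
  · intro h
    exact h.mem_affineSpan_of_mem_of_ne (by simp) (by simp) (by simp) hab
  · intro h
    have := collinear_insert_of_mem_affineSpan_pair h
    rwa [Set.insert_comm, Set.pair_comm] at this

theorem isRectDrawing_iff {V : Type*} [Finite V] {f : V → Pt} :
    IsRectDrawing f ↔ Function.Injective f ∧
      ∀ a b c, a ≠ b → a ≠ c → b ≠ c → orient (f a) (f b) (f c) ≠ 0 := by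
  refine and_congr_right fun hf => ?_
  simp only [GenericConfig, Set.finite_range, true_and, Set.forall_mem_range, hf.ne_iff]
  refine forall₃_congr fun a b c => forall_congr' fun hab => ?_
  simp only [collinear_iff_orient_eq_zero (hf.ne hab), ne_eq]

end Orientation

section Separation

variable {E : Type*} [AddCommGroup E] [Module ℝ E] [TopologicalSpace E] [IsTopologicalAddGroup E]
  [ContinuousSMul ℝ E]

theorem connectedComponentIn_ne_zero_eq_iff (φ : E →ᵃ[ℝ] ℝ) (hφ : Continuous φ) {x y : E}
    (hx : φ x ≠ 0) (hy : φ y ≠ 0) :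
    connectedComponentIn {z | φ z ≠ 0} x = connectedComponentIn {z | φ z ≠ 0} y ↔
      0 < φ x * φ y := by
  have eq_of_mem_convex {C : Set ℝ} (hC : Convex ℝ C) (hC0 : (0 : ℝ) ∉ C) (hxC : φ x ∈ C)
      (hyC : φ y ∈ C) : connectedComponentIn {z | φ z ≠ 0} x =
        connectedComponentIn {z | φ z ≠ 0} y :=
    connectedComponentIn_eq <| (hC.affine_preimage φ).isPreconnected.subset_connectedComponentIn
      hxC (fun z (hz : φ z ∈ C) (hz0 : φ z = 0) => hC0 (hz0 ▸ hz)) hyC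
  constructor
  · intro heq
    have hxK := mem_connectedComponentIn (F := {z | φ z ≠ 0}) hx
    have hyK := heq ▸ mem_connectedComponentIn (F := {z | φ z ≠ 0}) hy
    have hK : (φ '' connectedComponentIn {z | φ z ≠ 0} x).OrdConnected :=
      (isPreconnected_connectedComponentIn.image φ hφ.continuousOn).ordConnected
    by_contra! hxy
    obtain ⟨z, hzK, hz⟩ : (0 : ℝ) ∈ φ '' connectedComponentIn {z | φ z ≠ 0} x :=
      hK.uIcc_subset (Set.mem_image_of_mem φ hxK) (Set.mem_image_of_mem φ hyK) <| by
        rw [Set.mem_uIcc]; rcases mul_nonpos_iff.mp hxy with h | h <;> tauto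
    exact connectedComponentIn_subset _ _ hzK hz
  · intro hxy
    rcases pos_and_pos_or_neg_and_neg_of_mul_pos hxy with ⟨hx, hy⟩ | ⟨hx, hy⟩
    · exact eq_of_mem_convex (convex_Ioi 0) Set.self_notMem_Ioi hx hy
    · exact eq_of_mem_convex (convex_Iio 0) Set.self_notMem_Iio hx hy

theorem separates_lineThrough_iff {a b : Pt} (hab : a ≠ b) (P Q : Pt) :
    Separates (lineThrough a b) P Q ↔ orient a b P * orient a b Q < 0 := by
  obtain ⟨φ, hφ⟩ := exists_affineMap_eq_orient a b
  have hcompl : (lineThrough a b)ᶜ = {c | φ c ≠ 0} := by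
    ext c
    simp [mem_lineThrough_iff_s4 hab, hφ]
  rw [Separates, mem_lineThrough_iff_s4 hab, mem_lineThrough_iff_s4 hab, hcompl, ← hφ]
  constructor
  · rintro ⟨hP, hQ, hne⟩
    rw [ne_eq, connectedComponentIn_ne_zero_eq_iff φ φ.continuous_of_finiteDimensional hP hQ,
      not_lt] at hne
    exact hne.lt_of_ne (mul_ne_zero hP hQ)
  · intro h
    obtain ⟨hP, hQ⟩ := mul_ne_zero_iff.mp h.ne
    rw [ne_eq, connectedComponentIn_ne_zero_eq_iff φ φ.continuous_of_finiteDimensional hP hQ]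
    exact ⟨hP, hQ, h.not_gt⟩

/-- Orienting each separating line so that `f s` lies on its left turns the unordered pairs of
`sepCount` into ordered ones. -/
theorem sepCount_eq_card_s4 {V : Type*} [Fintype V] [DecidableEq V] {f : V → Pt}
    (hf : Function.Injective f) (s t : V) :
    sepCount f s t = #{q : V × V | 0 < orient (f q.1) (f q.2) (f s) ∧
      orient (f q.1) (f q.2) (f t) < 0} := by
  set Q : Finset (V × V) := {q | 0 < orient (f q.1) (f q.2) (f s) ∧
    orient (f q.1) (f q.2) (f t) < 0} with hQ
  have hinj : Set.InjOn (fun q : V × V => ({q.1, q.2} : Finset V)) Q := by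
    rintro ⟨a, b⟩ hab ⟨c, d⟩ hcd h
    simp only [hQ, coe_filter_univ, Set.mem_ofPred_eq] at hab hcd
    rw [← coe_inj, coe_pair, coe_pair, Set.pair_eq_pair_iff] at h
    obtain h | ⟨rfl, rfl⟩ := h
    · exact Prod.ext h.1 h.2
    · linarith [orient_swap_left (f a) (f b) (f s)]
  rw [sepCount, ← card_image_of_injOn hinj, ← Set.ncard_coe_finset]
  congr 1
  ext e
  simp only [Set.mem_ofPred_eq, coe_image, Set.mem_image, mem_coe, Prod.exists, hQ, mem_filter_univ]
  constructor
  · rintro ⟨a, b, rfl, hab, -, -, hsep⟩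
    rw [separates_lineThrough_iff (hf.ne hab), mul_neg_iff] at hsep
    obtain h | h := hsep
    · exact ⟨a, b, h, rfl⟩
    · refine ⟨b, a, ?_, pair_comm b a⟩
      simpa [orient_swap_left (f a) (f b)] using h
  · rintro ⟨a, b, ⟨hs, ht⟩, rfl⟩
    have hab : a ≠ b := by rintro rfl; simp at hs
    refine ⟨a, b, rfl, hab, ?_, ?_,
      (separates_lineThrough_iff (hf.ne hab) _ _).mpr (mul_neg_of_pos_of_neg hs ht)⟩
    · simp only [mem_insert, mem_singleton]
      rintro (rfl | rfl) <;> simp at hs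
    · simp only [mem_insert, mem_singleton]
      rintro (rfl | rfl) <;> simp at ht

end Separation

section Choose

theorem two_mul_add_one_choose_two (m : ℕ) : (2 * m + 1).choose 2 = (2 * m + 1) * m := by
  rw [Nat.choose_two_right, Nat.add_sub_cancel, mul_left_comm, Nat.mul_div_cancel_left _ two_pos]

theorem card_mul_choose_le_sum_choose {ι : Type*} (s : Finset ι) (d : ι → ℕ) {m : ℕ}
    (hd : ∑ i ∈ s, d i = #s * m) (k : ℕ) :
    #s * m.choose k ≤ ∑ i ∈ s, (d i).choose k := by
  rcases Nat.eq_zero_or_pos k with rfl | hk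
  · simp
  rcases lt_or_ge m k with hmk | hkm
  · simp [Nat.choose_eq_zero_of_lt hmk]
  rcases s.eq_empty_or_nonempty with rfl | hs
  · simp
  have hs0 : (#s : ℝ) ≠ 0 := by simpa using hs.ne_empty
  have hmean : ∑ i ∈ s, (#s : ℝ)⁻¹ * d i = m := by
    rw [← mul_sum, inv_mul_eq_iff_eq_mul₀ hs0]
    exact_mod_cast hd
  have hkm' : (k : ℝ) - 1 ≤ m := by
    have : (k : ℝ) ≤ m := mod_cast hkm
    linarith
  have jensen := descPochhammer_eval_div_factorial_le_sum_choose hk.ne' d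
    (fun _ => (#s : ℝ)⁻¹) (t := s) (fun _ _ => by positivity) (by simp [hs0])
    (hmean ▸ hkm')
  rw [hmean, ← Nat.cast_choose_eq_descPochhammer_div, ← mul_sum, le_inv_mul_iff₀ (by positivity)]
    at jensen
  exact_mod_cast jensen

end Choose

section Tournament

variable {ι : Type*}

variable {r : ι → ι → Prop} [Std.Asymm r] [Std.Trichotomous r]

theorem card_filter_product_eq_choose_two [DecidableRel r] (s : Finset ι) :
    #{q ∈ s ×ˢ s | r q.1 q.2} = (#s).choose 2 := by
  classical
  have hoff : s.offDiag = {q ∈ s ×ˢ s | r q.1 q.2} ∪ {q ∈ s ×ˢ s | r q.2 q.1} := by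
    ext ⟨i, j⟩
    have := Std.Asymm.asymm (r := r) i j
    have := Std.Asymm.asymm (r := r) i i
    have := Std.Trichotomous.trichotomous (r := r) i j
    simp only [mem_offDiag, mem_union, mem_filter, mem_product]
    grind
  have hdisj : Disjoint {q ∈ s ×ˢ s | r q.1 q.2} {q ∈ s ×ˢ s | r q.2 q.1} :=
    disjoint_filter.mpr fun q _ => Std.Asymm.asymm q.1 q.2
  have hswap : #{q ∈ s ×ˢ s | r q.2 q.1} = #{q ∈ s ×ˢ s | r q.1 q.2} :=
    card_equiv (Equiv.prodComm ι ι) (by simp [and_comm])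
  have hcard := congrArg card hoff
  rw [card_union_of_disjoint hdisj, hswap, offDiag_card, ← Nat.mul_sub_one] at hcard
  rw [Nat.choose_two_right, hcard]
  omega

variable [Fintype ι]

open scoped Classical in
/-- The number of `j` with `r i j`, the out-degree of `i` in the digraph of the relation `r`. -/
noncomputable def outDegree (r : ι → ι → Prop) (i : ι) : ℕ := #{j | r i j}

open scoped Classical in
/-- The number of ordered triples satisfying the predicate `P`. -/
noncomputable def tripleCount (P : ι → ι → ι → Prop) : ℕ :=
  #{t : ι × ι × ι | P t.1 t.2.1 t.2.2}

theorem sum_outDegree : ∑ i, outDegree r i = (Fintype.card ι).choose 2 := by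
  classical
  rw [← card_univ, ← card_filter_product_eq_choose_two (r := r)]
  simp only [outDegree, card_filter, sum_product]

theorem tripleCount_eq_sum (P : ι → ι → ι → Prop) [∀ i j k, Decidable (P i j k)] :
    tripleCount P = ∑ i, #{q : ι × ι | P i q.1 q.2} := by
  simp only [tripleCount, card_filter, Fintype.sum_prod_type]
  congr!

theorem tripleCount_transitive :
    tripleCount (fun i j k => r i j ∧ r j k ∧ r i k) = ∑ i, (outDegree r i).choose 2 := by
  classical
  rw [tripleCount_eq_sum]
  refine sum_congr rfl fun i _ => ?_
  rw [outDegree, ← card_filter_product_eq_choose_two (r := r)]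
  congr 1
  ext
  simp only [mem_filter, mem_product, mem_univ, true_and]
  tauto

theorem tripleCount_swap (P : ι → ι → ι → Prop) :
    tripleCount (fun i j k => P j i k) = tripleCount P := by
  refine card_equiv ⟨fun t => (t.2.1, t.1, t.2.2), fun t => (t.2.1, t.1, t.2.2),
    fun _ => rfl, fun _ => rfl⟩ (by simp)

theorem tripleCount_rotate (P : ι → ι → ι → Prop) :
    tripleCount (fun i j k => P j k i) = tripleCount P := by
  refine card_equiv ⟨fun t => (t.2.1, t.2.2, t.1), fun t => (t.2.2, t.1, t.2.1),
    fun _ => rfl, fun _ => rfl⟩ (by simp)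

theorem tripleCount_or {P Q : ι → ι → ι → Prop} (h : ∀ i j k, P i j k → ¬ Q i j k) :
    tripleCount (fun i j k => P i j k ∨ Q i j k) = tripleCount P + tripleCount Q := by
  classical
  simp only [tripleCount, filter_or]
  rw [card_union_of_disjoint (disjoint_filter.mpr fun t _ => h _ _ _)]

end Tournament

section Ccw

variable {ι : Type*}

/-- Seen from `o`, the point `p j` lies counterclockwise from `p i`, by less than half a turn.
If no line through `o` contains two of the points, this is a tournament on `ι`. -/
def Ccw (o : Pt) (p : ι → Pt) (i j : ι) : Prop := 0 < orient o (p i) (p j)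

/-- The points `o, p i, p j, p k` are, in this counterclockwise order, the vertices of a convex
quadrilateral. -/
def IsConvexQuad (o : Pt) (p : ι → Pt) (i j k : ι) : Prop :=
  Ccw o p i j ∧ Ccw o p j k ∧ Ccw o p i k ∧ 0 < orient (p i) (p j) (p k)

/-- The quadrilateral with vertices `o, p i, p j, p k`, in this counterclockwise order, has a
reflex angle at `p j`. -/
def IsReflexQuad (o : Pt) (p : ι → Pt) (i j k : ι) : Prop :=
  Ccw o p i j ∧ Ccw o p j k ∧ orient (p i) (p j) (p k) < 0

variable {o : Pt} {p : ι → Pt} {i j k : ι}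

theorem Ccw.not_ccw (h : Ccw o p i j) : ¬ Ccw o p j i := by
  rw [Ccw, orient_swap_right, neg_pos]
  exact h.not_gt

instance : Std.Asymm (Ccw o p) := ⟨fun _ _ => Ccw.not_ccw⟩

theorem ccw_of_not_ccw (h : orient o (p i) (p j) ≠ 0) (hij : ¬ Ccw o p i j) : Ccw o p j i := by
  rw [Ccw, orient_swap_right, neg_pos]
  exact h.lt_of_le (not_lt.mp hij)

theorem trichotomous_ccw (hp : Pairwise fun i j => orient o (p i) (p j) ≠ 0) :
    Std.Trichotomous (Ccw o p) :=
  ⟨fun _ _ hij hji => by_contra fun hne => hji (ccw_of_not_ccw (hp hne) hij)⟩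

theorem IsReflexQuad.ccw (h : IsReflexQuad o p i j k) : Ccw o p i k := by
  obtain ⟨hij, hjk, hD⟩ := h
  rw [Ccw] at *
  linarith [orient_eq_add o (p i) (p j) (p k), orient_swap_right o (p i) (p k)]

theorem ccw_and_orient_neg_iff (hp : Pairwise fun i j => orient o (p i) (p j) ≠ 0) :
    Ccw o p j k ∧ orient (p i) (p j) (p k) < 0 ↔
      (IsReflexQuad o p i j k ∨ IsReflexQuad o p j k i) ∨ IsConvexQuad o p j i k := by
  constructor
  · rintro ⟨hjk, hD⟩
    have hij : i ≠ j := by rintro rfl; simp at hD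
    have hki : k ≠ i := by rintro rfl; simp at hD
    by_cases h₁ : Ccw o p i j
    · exact .inl (.inl ⟨h₁, hjk, hD⟩)
    by_cases h₂ : Ccw o p k i
    · exact .inl (.inr ⟨hjk, h₂, by rwa [orient_rotate]⟩)
    refine .inr ⟨ccw_of_not_ccw (hp hij) h₁, ccw_of_not_ccw (hp hki) h₂, hjk, ?_⟩
    rwa [orient_swap_left, neg_pos]
  · rintro ((⟨-, hjk, hD⟩ | ⟨hjk, -, hD⟩) | ⟨-, -, hjk, hD⟩)
    · exact ⟨hjk, hD⟩
    · exact ⟨hjk, by rwa [← orient_rotate]⟩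
    · exact ⟨hjk, by rwa [orient_swap_left, neg_pos] at hD⟩

theorem ccw_transitive_iff
    (hp : ∀ i j k, i ≠ j → i ≠ k → j ≠ k → orient (p i) (p j) (p k) ≠ 0) :
    Ccw o p i j ∧ Ccw o p j k ∧ Ccw o p i k ↔
      IsConvexQuad o p i j k ∨ IsReflexQuad o p i j k := by
  constructor
  · rintro ⟨hij, hjk, hik⟩
    have ne_of_ccw {i j : ι} (h : Ccw o p i j) : i ≠ j := by rintro rfl; exact h.not_ccw h
    rcases (hp i j k (ne_of_ccw hij) (ne_of_ccw hik) (ne_of_ccw hjk)).lt_or_gt with hD | hD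
    · exact .inr ⟨hij, hjk, hD⟩
    · exact .inl ⟨hij, hjk, hik, hD⟩
  · rintro (⟨hij, hjk, hik, -⟩ | h)
    · exact ⟨hij, hjk, hik⟩
    · exact ⟨h.1, h.2.1, h.ccw⟩

theorem tripleCount_separations [Fintype ι]
    (hcenter : Pairwise fun i j => orient o (p i) (p j) ≠ 0)
    (houter : ∀ i j k, i ≠ j → i ≠ k → j ≠ k → orient (p i) (p j) (p k) ≠ 0) :
    tripleCount (fun i j k => Ccw o p j k ∧ orient (p i) (p j) (p k) < 0) =
      ∑ i, (outDegree (Ccw o p) i).choose 2 + tripleCount (IsReflexQuad o p) := by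
  have := trichotomous_ccw hcenter
  have hseparations :
      tripleCount (fun i j k => Ccw o p j k ∧ orient (p i) (p j) (p k) < 0) =
        tripleCount (IsReflexQuad o p) + tripleCount (IsReflexQuad o p) +
          tripleCount (IsConvexQuad o p) := by
    simp only [ccw_and_orient_neg_iff hcenter]
    rw [tripleCount_or, tripleCount_or, tripleCount_rotate (IsReflexQuad o p),
      tripleCount_swap (IsConvexQuad o p)]
    · exact fun i j k h h' => h.ccw.not_ccw h'.2.1
    · rintro i j k (h | h) h'
      · exact h.1.not_ccw h'.1
      · exact h.2.1.not_ccw h'.2.1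
  have htransitive : ∑ i, (outDegree (Ccw o p) i).choose 2 =
      tripleCount (IsConvexQuad o p) + tripleCount (IsReflexQuad o p) := by
    rw [← tripleCount_transitive]
    simp only [ccw_transitive_iff houter]
    exact tripleCount_or fun i j k h h' => h.2.2.2.not_gt h'.2.2
  omega

end Ccw

section Star

variable {n : ℕ}

theorem drawingCrossings_starGraph (f : Fin (n + 1) → Pt) :
    drawingCrossings (starGraph n) f = ∑ i : Fin n, sepCount f 0 i.succ := by
  have hedges : (starGraph n).edgeSet.toFinite.toFinset =
      univ.image fun i : Fin n => s((0 : Fin (n + 1)), i.succ) := by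
    ext e
    simp only [starGraph, SimpleGraph.edgeSet_fromEdgeSet, Set.Finite.mem_toFinset, Set.mem_sdiff,
      Set.mem_ofPred_eq, mem_image, mem_univ, true_and]
    constructor
    · rintro ⟨⟨i, rfl⟩, -⟩
      exact ⟨i, rfl⟩
    · rintro ⟨i, rfl⟩
      exact ⟨⟨i, rfl⟩, by simpa using (Fin.succ_ne_zero i).symm⟩
  rw [drawingCrossings, hedges, sum_image fun i _ j _ hij => by simpa using hij]
  rfl

theorem drawingCrossings_starGraph_eq_tripleCount {f : Fin (n + 1) → Pt}
    (hf : Function.Injective f) :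
    drawingCrossings (starGraph n) f = tripleCount fun i j k => Ccw (f 0) (Fin.tail f) j k ∧
      orient (Fin.tail f i) (Fin.tail f j) (Fin.tail f k) < 0 := by
  classical
  rw [drawingCrossings_starGraph, tripleCount_eq_sum]
  refine sum_congr rfl fun i _ => ?_
  simp only [sepCount_eq_card_s4 hf, card_filter, Fintype.sum_prod_type, Fin.sum_univ_succ,
    orient_rotate (f 0), orient_rotate (f i.succ), orient_self_left, lt_irrefl,
    false_and, if_false, zero_add, sum_const_zero]
  rfl

theorem isRectDrawing_fin_succ_iff {f : Fin (n + 1) → Pt} :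
    IsRectDrawing f ↔ Function.Injective f ∧
      (Pairwise fun i j => orient (f 0) (Fin.tail f i) (Fin.tail f j) ≠ 0) ∧
      ∀ i j k, i ≠ j → i ≠ k → j ≠ k →
        orient (Fin.tail f i) (Fin.tail f j) (Fin.tail f k) ≠ 0 := by
  rw [isRectDrawing_iff]
  refine and_congr_right fun _ => ⟨fun h => ⟨fun i j hij => ?_, fun i j k hij hik hjk => ?_⟩, ?_⟩
  · exact h 0 i.succ j.succ (Fin.succ_ne_zero i).symm (Fin.succ_ne_zero j).symm (by simpa using hij)
  · exact h i.succ j.succ k.succ (by simpa using hij) (by simpa using hik) (by simpa using hjk)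
  · rintro ⟨hcenter, houter⟩ a b c hab hac hbc
    cases a using Fin.cases with
    | zero =>
      obtain ⟨b, rfl⟩ := Fin.exists_succ_eq.mpr hab.symm
      obtain ⟨c, rfl⟩ := Fin.exists_succ_eq.mpr hac.symm
      exact hcenter (by simpa using hbc)
    | succ a =>
      cases b using Fin.cases with
      | zero =>
        obtain ⟨c, rfl⟩ := Fin.exists_succ_eq.mpr hbc.symm
        rw [orient_swap_left]
        exact neg_ne_zero.mpr (hcenter (by simpa using hac))
      | succ b =>
        cases c using Fin.cases with
        | zero =>
          rw [orient_rotate]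
          exact hcenter (by simpa using hab)
        | succ c =>
          exact houter a b c (by simpa using hab) (by simpa using hac) (by simpa using hbc)

theorem drawingCrossings_starGraph_eq_sum_choose_add {f : Fin (n + 1) → Pt}
    (hf : IsRectDrawing f) :
    drawingCrossings (starGraph n) f =
      ∑ i, (outDegree (Ccw (f 0) (Fin.tail f)) i).choose 2 +
        tripleCount (IsReflexQuad (f 0) (Fin.tail f)) := by
  obtain ⟨hinj, hcenter, houter⟩ := isRectDrawing_fin_succ_iff.mp hf
  rw [drawingCrossings_starGraph_eq_tripleCount hinj, tripleCount_separations hcenter houter]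

theorem le_drawingCrossings_starGraph {m : ℕ} {f : Fin (2 * m + 1 + 1) → Pt}
    (hf : IsRectDrawing f) :
    (2 * m + 1) * m.choose 2 ≤ drawingCrossings (starGraph (2 * m + 1)) f := by
  obtain ⟨-, hcenter, -⟩ := isRectDrawing_fin_succ_iff.mp hf
  have := trichotomous_ccw hcenter
  have hsum : ∑ i, outDegree (Ccw (f 0) (Fin.tail f)) i =
      #(univ : Finset (Fin (2 * m + 1))) * m := by
    rw [sum_outDegree, Fintype.card_fin, card_fin, two_mul_add_one_choose_two]
  have hjensen := card_mul_choose_le_sum_choose univ _ hsum 2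
  rw [card_fin] at hjensen
  rw [drawingCrossings_starGraph_eq_sum_choose_add hf]
  exact hjensen.trans (Nat.le_add_right _ _)

end Star

section UnitCircle

variable {a b c : Pt}

/-- The circumradius formula: the product of the sides is `4 * R * area`, here with `R = 1`. -/
theorem four_mul_sq_orient (ha : a.1 ^ 2 + a.2 ^ 2 = 1) (hb : b.1 ^ 2 + b.2 ^ 2 = 1)
    (hc : c.1 ^ 2 + c.2 ^ 2 = 1) :
    4 * orient a b c ^ 2 = ((a.1 - b.1) ^ 2 + (a.2 - b.2) ^ 2) *
      ((b.1 - c.1) ^ 2 + (b.2 - c.2) ^ 2) * ((c.1 - a.1) ^ 2 + (c.2 - a.2) ^ 2) := by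
  unfold orient
  grind

theorem orient_pos_of_unit (ha : a.1 ^ 2 + a.2 ^ 2 = 1) (hb : b.1 ^ 2 + b.2 ^ 2 = 1)
    (hc : c.1 ^ 2 + c.2 ^ 2 = 1) (hab : 0 < orient 0 a b) (hbc : 0 < orient 0 b c) :
    0 < orient a b c := by
  have dot_lt_one {x y : Pt} (hx : x.1 ^ 2 + x.2 ^ 2 = 1) (hy : y.1 ^ 2 + y.2 ^ 2 = 1)
      (hxy : 0 < orient 0 x y) : x.1 * y.1 + x.2 * y.2 < 1 := by
    have hsq : (x.1 * y.1 + x.2 * y.2) ^ 2 + orient 0 x y ^ 2 = 1 := by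
      unfold orient; simp only [Prod.fst_zero, Prod.snd_zero]; grind
    nlinarith [pow_pos hxy 2]
  have hsplit : orient a b c = orient 0 a b * (1 - (b.1 * c.1 + b.2 * c.2)) +
      orient 0 b c * (1 - (a.1 * b.1 + a.2 * b.2)) := by
    unfold orient
    simp only [Prod.fst_zero, Prod.snd_zero]
    grind
  rw [hsplit]
  exact add_pos (mul_pos hab (sub_pos.mpr (dot_lt_one hb hc hbc)))
    (mul_pos hbc (sub_pos.mpr (dot_lt_one ha hb hab)))

theorem orient_ne_zero_of_unit (ha : a.1 ^ 2 + a.2 ^ 2 = 1) (hb : b.1 ^ 2 + b.2 ^ 2 = 1)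
    (hc : c.1 ^ 2 + c.2 ^ 2 = 1) (hab : a ≠ b) (hac : a ≠ c) (hbc : b ≠ c) :
    orient a b c ≠ 0 := by
  have sq_dist_ne_zero {x y : Pt} (hxy : x ≠ y) : (x.1 - y.1) ^ 2 + (x.2 - y.2) ^ 2 ≠ 0 := by
    exact fun h => hxy <|
      Prod.ext (by nlinarith [sq_nonneg (x.2 - y.2)]) (by nlinarith [sq_nonneg (x.1 - y.1)])
  intro h
  have hprod := four_mul_sq_orient ha hb hc
  rw [h, zero_pow two_ne_zero, mul_zero, eq_comm] at hprod
  exact mul_ne_zero (mul_ne_zero (sq_dist_ne_zero hab) (sq_dist_ne_zero hbc))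
    (sq_dist_ne_zero hac.symm) hprod

end UnitCircle

section RegularPolygon

/-- The vertices of the regular `n`-gon inscribed in the unit circle, indexed by `ZMod n`. -/
noncomputable def regularPolygon (n : ℕ) [NeZero n] (i : ZMod n) : Pt :=
  ((ZMod.toCircle i : ℂ).re, (ZMod.toCircle i : ℂ).im)

variable {n : ℕ} [NeZero n]

theorem regularPolygon_unit (i : ZMod n) :
    (regularPolygon n i).1 ^ 2 + (regularPolygon n i).2 ^ 2 = 1 := by
  simpa only [regularPolygon, Complex.normSq_apply, sq] using Circle.normSq_coe (ZMod.toCircle i)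

theorem orient_regularPolygon (i j : ZMod n) :
    orient 0 (regularPolygon n i) (regularPolygon n j) = (ZMod.toCircle (j - i) : ℂ).im := by
  rw [AddChar.map_sub_eq_div, div_eq_mul_inv, Circle.coe_mul, Circle.coe_inv_eq_conj]
  simp only [orient, regularPolygon, Prod.fst_zero, Prod.snd_zero, sub_zero, Complex.mul_im,
    Complex.conj_re, Complex.conj_im]
  ring

theorem toCircle_im_ne_zero (hn : Odd n) {i : ZMod n} (hi : i ≠ 0) :
    (ZMod.toCircle i : ℂ).im ≠ 0 := by
  intro him
  have heq : ZMod.toCircle (-i) = ZMod.toCircle i := by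
    rw [AddChar.map_neg_eq_inv]
    ext
    rw [Circle.coe_inv_eq_conj, Complex.conj_eq_iff_im.mpr him]
  exact hi ((ZMod.neg_eq_self_iff i).mp (ZMod.injective_toCircle heq) |>.resolve_right fun h =>
    Nat.not_even_iff_odd.mpr hn ⟨i.val, by omega⟩)

theorem pairwise_orient_regularPolygon_ne_zero (hn : Odd n) :
    Pairwise fun i j => orient 0 (regularPolygon n i) (regularPolygon n j) ≠ 0 := by
  intro i j hij
  rw [orient_regularPolygon]
  exact toCircle_im_ne_zero hn (sub_ne_zero.mpr hij.symm)

theorem regularPolygon_injective : Function.Injective (regularPolygon n) := fun _ _ h =>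
  ZMod.injective_toCircle <| Circle.ext <|
    Complex.ext (congrArg Prod.fst h) (congrArg Prod.snd h)

theorem outDegree_regularPolygon (m : ℕ) (i : ZMod (2 * m + 1)) :
    outDegree (Ccw 0 (regularPolygon (2 * m + 1))) i = m := by
  have hrotate (j : ZMod (2 * m + 1)) : outDegree (Ccw 0 (regularPolygon (2 * m + 1))) j =
      outDegree (Ccw 0 (regularPolygon (2 * m + 1))) i := by
    refine card_equiv (Equiv.addRight (i - j)) fun k => ?_
    simp only [Ccw, orient_regularPolygon, mem_filter, mem_univ, true_and, Equiv.coe_addRight]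
    rw [add_sub_assoc, sub_sub_cancel_left, ← sub_eq_add_neg]
  have := trichotomous_ccw (pairwise_orient_regularPolygon_ne_zero ⟨m, rfl⟩)
  have hsum := sum_outDegree (r := Ccw 0 (regularPolygon (2 * m + 1)))
  rw [sum_congr rfl fun j _ => hrotate j, sum_const, card_univ, ZMod.card, smul_eq_mul,
    two_mul_add_one_choose_two] at hsum
  exact Nat.eq_of_mul_eq_mul_left (Nat.succ_pos _) hsum

theorem not_isReflexQuad_regularPolygon (i j k : ZMod n) :
    ¬ IsReflexQuad 0 (regularPolygon n) i j k := fun ⟨hij, hjk, hD⟩ =>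
  hD.not_gt <| orient_pos_of_unit (regularPolygon_unit i) (regularPolygon_unit j)
    (regularPolygon_unit k) hij hjk

/-- The regular `n`-gon and its centre, as a placement of the vertices of `starGraph n`. -/
noncomputable def centredPolygon (n : ℕ) [NeZero n] : Fin (n + 1) → Pt :=
  Fin.cons 0 (regularPolygon n ∘ ZMod.finEquiv n)

theorem isRectDrawing_centredPolygon (hn : Odd n) : IsRectDrawing (centredPolygon n) := by
  have he := (ZMod.finEquiv n).injective
  refine isRectDrawing_fin_succ_iff.mpr ⟨Fin.cons_injective_iff.mpr ⟨?_, ?_⟩, ?_, ?_⟩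
  · rintro ⟨i, hi⟩
    have hunit := regularPolygon_unit (ZMod.finEquiv n i)
    rw [show regularPolygon n (ZMod.finEquiv n i) = 0 from hi] at hunit
    norm_num at hunit
  · exact regularPolygon_injective.comp he
  · exact fun i j hij => pairwise_orient_regularPolygon_ne_zero hn (he.ne hij)
  · exact fun i j k hij hik hjk => orient_ne_zero_of_unit (regularPolygon_unit _)
      (regularPolygon_unit _) (regularPolygon_unit _) (regularPolygon_injective.ne (he.ne hij))
      (regularPolygon_injective.ne (he.ne hik)) (regularPolygon_injective.ne (he.ne hjk))

theorem drawingCrossings_centredPolygon (m : ℕ) :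
    drawingCrossings (starGraph (2 * m + 1)) (centredPolygon (2 * m + 1)) =
      (2 * m + 1) * m.choose 2 := by
  let e := ZMod.finEquiv (2 * m + 1)
  have hdegree (i) : outDegree (Ccw 0 (regularPolygon (2 * m + 1) ∘ e)) i = m :=
    (card_equiv e.toEquiv fun j => by simp only [mem_filter_univ]; rfl).trans
      (outDegree_regularPolygon m (e i))
  have hreflex : tripleCount (IsReflexQuad 0 (regularPolygon (2 * m + 1) ∘ e)) = 0 := by
    classical
    rw [tripleCount, card_filter_eq_zero_iff]
    exact fun t _ => not_isReflexQuad_regularPolygon (e t.1) (e t.2.1) (e t.2.2)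
  rw [drawingCrossings_starGraph_eq_sum_choose_add (isRectDrawing_centredPolygon ⟨m, rfl⟩)]
  change ∑ i, (outDegree (Ccw 0 (regularPolygon (2 * m + 1) ∘ e)) i).choose 2 +
    tripleCount (IsReflexQuad 0 (regularPolygon (2 * m + 1) ∘ e)) = _
  simp [hdegree, hreflex]

end RegularPolygon

end OrchardStar

/-- For odd n ≥ 3, `OCN(K_{n,1}) = n(n-1)(n-3)/8`. -/
theorem stmt_4 (n : ℕ) (hn : 3 ≤ n) (hodd : Odd n) :
    OCN (starGraph n) = n * (n - 1) * (n - 3) / 8 := by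
  obtain ⟨m, rfl⟩ := hodd
  have hvalue : (2 * m + 1) * (2 * m + 1 - 1) * (2 * m + 1 - 3) / 8 = (2 * m + 1) * m.choose 2 := by
    have hchoose : m * (m - 1) = 2 * m.choose 2 := by
      rw [Nat.choose_two_right, Nat.mul_div_cancel' (Nat.even_mul_pred_self m).two_dvd]
    refine Nat.div_eq_of_eq_mul_right (by norm_num) ?_
    rw [Nat.add_sub_cancel, show 2 * m + 1 - 3 = 2 * (m - 1) by omega]
    linear_combination 4 * (2 * m + 1) * hchoose
  rw [hvalue]
  refine IsLeast.csInf_eq ⟨⟨centredPolygon (2 * m + 1), ?_, ?_⟩, ?_⟩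
  · exact isRectDrawing_centredPolygon ⟨m, rfl⟩
  · exact drawingCrossings_centredPolygon m
  · rintro _ ⟨f, hf, rfl⟩
    exact le_drawingCrossings_starGraph hf
end
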